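/- arXiv:1608.00219 — 2 statements merged into one kernel-verified Lean document; each statement's English description precedes it below -/
import Mathlib

section
/- The normalized Bessel function satisfies the product formula for the generalized translation: for ν > 0 and all λ, μ ≥ 0, (Γ((ν+1)/2)/(√π Γ(ν/2))) ∫_0^π j_{(ν−1)/2}(√(λ² + μ² − 2λμ cos φ)) sin^{ν−1}φ dφ = j_{(ν−1)/2}(λ) · j_{(ν−1)/2}(μ). -/
open MeasureTheory Real Set Metric

noncomputable section

/-- The one-dimensional generalized translation
`ᵛ𝒯_s^t g(s) = (Γ((ν+1)/2)/(√π Γ(ν/2))) ∫_0^π g(√(s²+t²−2st cos φ)) sin^{ν−1} φ dφ`. -/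
def genT (ν : ℝ) (g : ℝ → ℝ) (s t : ℝ) : ℝ :=
  (Real.Gamma ((ν + 1) / 2) / (Real.sqrt π * Real.Gamma (ν / 2))) *
    ∫ φ in (0:ℝ)..π,
      g (Real.sqrt (s ^ 2 + t ^ 2 - 2 * s * t * Real.cos φ)) * Real.sin φ ^ (ν - 1)

/-- The normalized Bessel function `j_ω`, via the Poisson integral representation
`j_ω(t) = (Γ(ω+1)/(√π Γ(ω+1/2))) ∫_0^π cos(t cos θ) sin^{2ω} θ dθ`,
which for `ω > -1/2` agrees with `Γ(ω+1)(2/t)^ω J_ω(t)`. -/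
def normBessel (ω t : ℝ) : ℝ :=
  (Real.Gamma (ω + 1) / (Real.sqrt π * Real.Gamma (ω + 1 / 2))) *
    ∫ θ in (0:ℝ)..π, Real.cos (t * Real.cos θ) * Real.sin θ ^ (2 * ω)


/-- The Chu–Vandermonde identity `₂F₁(-m, -n; a; 1) = (a + n)_m / (a)_m`. -/
theorem sum_choose_mul_descFactorial_div_ascPochhammer (m n : ℕ) (a : ℝ) (ha : 0 < a) :
    ∑ j ∈ Finset.range (m + 1),
      (m.choose j : ℝ) * n.descFactorial j / (ascPochhammer ℝ j).eval a =
      (ascPochhammer ℝ m).eval (a + n) / (ascPochhammer ℝ m).eval a := by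
  induction m generalizing n a with
  | zero => simp
  | succ m ih =>
    have hsucc : ∀ j, (ascPochhammer ℝ (j + 1)).eval a = a * (ascPochhammer ℝ j).eval (a + 1) := by
      intro j; simp [ascPochhammer_succ_left]
    have hpos := ascPochhammer_pos m a ha
    have split : ∑ j ∈ Finset.range (m + 1 + 1),
        ((m + 1).choose j : ℝ) * n.descFactorial j / (ascPochhammer ℝ j).eval a =
        ∑ j ∈ Finset.range (m + 1),
          (m.choose j : ℝ) * n.descFactorial j / (ascPochhammer ℝ j).eval a +
        ∑ j ∈ Finset.range (m + 1),
          (m.choose j : ℝ) * n.descFactorial (j + 1) / (ascPochhammer ℝ (j + 1)).eval a := by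
      have h1 : ∑ j ∈ Finset.range (m + 1),
          (m.choose j : ℝ) * n.descFactorial j / (ascPochhammer ℝ j).eval a =
          ∑ j ∈ Finset.range (m + 1 + 1),
          (m.choose j : ℝ) * n.descFactorial j / (ascPochhammer ℝ j).eval a := by
        rw [Finset.sum_range_succ _ (m + 1)]; simp
      rw [h1, Finset.sum_range_succ' _ (m + 1), Finset.sum_range_succ' _ (m + 1)]
      simp only [Nat.choose_succ_succ, Nat.cast_add, add_mul, add_div, Finset.sum_add_distrib]
      simp
      ring
    rw [split, ih n a ha]
    cases n with
    | zero =>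
      have := ascPochhammer_pos (m + 1) a ha
      simp [hpos.ne', this.ne']
    | succ n =>
      have h2 : ∑ j ∈ Finset.range (m + 1),
          (m.choose j : ℝ) * (n + 1).descFactorial (j + 1) / (ascPochhammer ℝ (j + 1)).eval a =
          (n + 1) / a * ∑ j ∈ Finset.range (m + 1),
            (m.choose j : ℝ) * n.descFactorial j / (ascPochhammer ℝ j).eval (a + 1) := by
        rw [Finset.mul_sum]
        refine Finset.sum_congr rfl fun j _ => ?_
        have := ascPochhammer_pos j (a + 1) (by linarith)
        rw [hsucc, Nat.succ_descFactorial_succ]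
        push_cast
        field_simp
      have h3 := hsucc m
      rw [ascPochhammer_succ_eval] at h3
      have h4 : (ascPochhammer ℝ m).eval (a + 1) = (ascPochhammer ℝ m).eval a * (a + m) / a := by
        rw [h3]; field_simp
      rw [h2, ih n (a + 1) (by linarith), ascPochhammer_succ_eval, ascPochhammer_succ_eval, h4]
      have : a + 1 + (n : ℝ) = a + ((n + 1 : ℕ) : ℝ) := by push_cast; ring
      rw [this]
      have : 0 < a + m := by positivity
      field_simp
      push_cast
      ring

/-- Expansion of `∑ C(k,i) (-2xy)^i M_i (x² + y²)^(k-i)` in monomials `x^(2m) y^(2n)` when the odd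
terms of `M` vanish. -/
theorem sum_antidiagonal_choose_mul_pow_eq (x y : ℝ) (M : ℕ → ℝ) (hM : ∀ j, M (2 * j + 1) = 0)
    (k : ℕ) :
    ∑ p ∈ Finset.HasAntidiagonal.antidiagonal k,
      (k.choose p.1 : ℝ) * (-(2 * x * y)) ^ p.1 * M p.1 * (x ^ 2 + y ^ 2) ^ p.2 =
    ∑ q ∈ Finset.HasAntidiagonal.antidiagonal k, x ^ (2 * q.1) * y ^ (2 * q.2) *
      (k.factorial / (q.1.factorial * q.2.factorial) * ∑ j ∈ Finset.range (q.1 + 1),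
        (q.1.choose j : ℝ) * q.2.descFactorial j *
          (4 ^ j * j.factorial / (2 * j).factorial * M (2 * j))) := by
  simp_rw [(Commute.all (x ^ 2) (y ^ 2)).add_pow', Finset.mul_sum]
  rw [Finset.sum_sigma', Finset.sum_sigma']
  refine Finset.sum_bij_ne_zero
    (fun p _ _ => ⟨(p.2.1 + p.1.1 / 2, p.2.2 + p.1.1 / 2), p.1.1 / 2⟩) ?_ ?_ ?_ ?_
  · rintro ⟨⟨i, r⟩, p, q⟩ h hne
    simp only [Finset.mem_sigma, Finset.HasAntidiagonal.mem_antidiagonal, Finset.mem_range] at h ⊢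
    obtain ⟨j, rfl | rfl⟩ := Nat.even_or_odd' i
    · omega
    · simp [hM] at hne
  · rintro ⟨⟨i, r⟩, p, q⟩ h hne ⟨⟨i', r'⟩, p', q'⟩ h' hne' heq
    simp only [Finset.mem_sigma, Finset.HasAntidiagonal.mem_antidiagonal] at h h'
    obtain ⟨j, rfl | rfl⟩ := Nat.even_or_odd' i
    · obtain ⟨j', rfl | rfl⟩ := Nat.even_or_odd' i'
      · simp only [Sigma.mk.injEq, Prod.mk.injEq, heq_eq_eq] at heq ⊢
        omega
      · simp [hM] at hne'
    · simp [hM] at hne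
  · rintro ⟨⟨m, n⟩, j⟩ h hne
    simp only [Finset.mem_sigma, Finset.HasAntidiagonal.mem_antidiagonal, Finset.mem_range] at h
    have hjn : j ≤ n := by
      by_contra hlt
      rw [Nat.descFactorial_eq_zero_iff_lt.2 (by omega : n < j)] at hne
      simp at hne
    obtain ⟨p, rfl⟩ := Nat.exists_eq_add_of_le (by omega : j ≤ m)
    obtain ⟨q, rfl⟩ := Nat.exists_eq_add_of_le hjn
    have hM0 : M (2 * j) ≠ 0 := by rintro h0; simp [h0] at hne
    have hxy : x ^ (2 * (j + p)) * y ^ (2 * (j + q)) ≠ 0 := by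
      rintro h0; simp only [h0, zero_mul, ne_eq, not_true_eq_false] at hne
    refine ⟨⟨(2 * j, p + q), (p, q)⟩, by simp; omega, ?_, by simp; omega⟩
    have e : x ^ (2 * (j + p)) * y ^ (2 * (j + q)) =
        (x * y) ^ (2 * j) * ((x ^ 2) ^ p * (y ^ 2) ^ q) := by ring
    rw [e] at hxy
    have c1 : ((k.choose (2 * j) : ℕ) : ℝ) ≠ 0 := by
      exact_mod_cast (Nat.choose_pos (by omega)).ne'
    have c2 : (((p + q).choose p : ℕ) : ℝ) ≠ 0 := by
      exact_mod_cast (Nat.choose_pos (by omega)).ne'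
    have e2 : (-(2 * x * y)) ^ (2 * j) = 4 ^ j * (x * y) ^ (2 * j) := by
      rw [pow_mul, pow_mul, ← mul_pow]; ring
    simp only [nsmul_eq_mul, e2]
    have := left_ne_zero_of_mul hxy
    have := right_ne_zero_of_mul hxy
    positivity
  · rintro ⟨⟨i, r⟩, p, q⟩ h hne
    simp only [Finset.mem_sigma, Finset.HasAntidiagonal.mem_antidiagonal] at h
    obtain ⟨rfl, rfl⟩ := h
    obtain ⟨j, rfl | rfl⟩ := Nat.even_or_odd' i
    swap
    · simp [hM] at hne
    have hj : 2 * j / 2 = j := by omega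
    simp only [hj, nsmul_eq_mul]
    have e2 : (-(2 * x * y)) ^ (2 * j) = 4 ^ j * (x * y) ^ (2 * j) := by
      rw [pow_mul, pow_mul, ← mul_pow]; ring
    rw [e2, Nat.cast_choose ℝ (by omega : 2 * j ≤ 2 * j + (p + q)),
      Nat.cast_choose ℝ (by omega : p ≤ p + q), Nat.cast_choose ℝ (by omega : j ≤ p + j)]
    have d : ((q + j).descFactorial j : ℝ) = (q + j).factorial / q.factorial := by
      rw [eq_div_iff (by positivity), mul_comm]
      have := Nat.factorial_mul_descFactorial (by omega : j ≤ q + j)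
      rw [Nat.add_sub_cancel] at this
      exact_mod_cast this
    rw [d]
    simp only [Nat.add_sub_cancel, Nat.add_sub_cancel_left]
    field_simp
    ring

theorem intervalIntegrable_sin_rpow_sub_one {ν : ℝ} (hν : 0 < ν) :
    IntervalIntegrable (fun φ : ℝ => sin φ ^ (ν - 1)) volume 0 π := by
  have hcont : Continuous fun φ : ℝ => sin φ ^ ν :=
    continuous_sin.rpow_const fun _ => Or.inr hν.le
  have hderiv : ∀ φ ∈ Ioo 0 π, HasDerivAt (fun φ : ℝ => sin φ ^ ν)
      (cos φ * ν * sin φ ^ (ν - 1)) φ := fun φ hφ =>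
    (hasDerivAt_sin φ).rpow_const (Or.inl (sin_pos_of_mem_Ioo hφ).ne')
  have hπ := pi_pos
  have h1 : IntervalIntegrable (fun φ : ℝ => cos φ * ν * sin φ ^ (ν - 1)) volume 0 (π / 2) := by
    refine intervalIntegral.intervalIntegrable_deriv_of_nonneg hcont.continuousOn ?_ ?_
    all_goals
      rw [min_eq_left (by positivity), max_eq_right (by positivity)]
      rintro φ ⟨h0, h1⟩
    · exact hderiv φ ⟨h0, by linarith⟩
    · have := cos_nonneg_of_mem_Icc (x := φ) ⟨by linarith, by linarith⟩
      have := sin_pos_of_mem_Ioo (x := φ) ⟨h0, by linarith⟩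
      positivity
  have h2 : IntervalIntegrable (fun φ : ℝ => -(cos φ * ν * sin φ ^ (ν - 1))) volume (π / 2) π := by
    refine intervalIntegral.intervalIntegrable_deriv_of_nonneg hcont.neg.continuousOn ?_ ?_
    all_goals
      rw [min_eq_left (by linarith), max_eq_right (by linarith)]
      rintro φ ⟨h0, h1⟩
    · exact (hderiv φ ⟨by linarith, h1⟩).neg
    · have := cos_nonpos_of_pi_div_two_le_of_le (x := φ) (by linarith) (by linarith)
      have := sin_pos_of_mem_Ioo (x := φ) ⟨by linarith, h1⟩
      rw [mul_assoc, ← neg_mul]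
      have : 0 ≤ -cos φ := by linarith
      positivity
  have h3 : IntervalIntegrable (fun φ : ℝ => cos φ * ν * sin φ ^ (ν - 1)) volume 0 π :=
    h1.trans (by simpa [Pi.neg_def] using h2.neg)
  have h4 : IntervalIntegrable (fun φ : ℝ => sin φ ^ (ν + 1)) volume 0 π :=
    (continuous_sin.rpow_const fun _ => Or.inr (by linarith)).intervalIntegrable _ _
  refine ((h3.continuousOn_mul
    (continuous_cos.div_const ν).continuousOn).add h4).congr_uIoo ?_
  intro φ hφ
  rw [uIoo_of_le hπ.le] at hφ
  have hs := sin_pos_of_mem_Ioo hφ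
  have : sin φ ^ (ν + 1) = sin φ ^ (ν - 1) * sin φ ^ 2 := by
    rw [← rpow_natCast, ← rpow_add hs]; norm_num; ring_nf
  simp only [this, sin_sq]
  field_simp
  ring

/-- The moments of `cos` against the weight `sin ^ (ν - 1)` on `[0, π]`. -/
def cosMoment (ν : ℝ) (i : ℕ) : ℝ := ∫ φ in (0 : ℝ)..π, cos φ ^ i * sin φ ^ (ν - 1)

theorem intervalIntegrable_mul_sin_rpow {ν : ℝ} (hν : 0 < ν) {f : ℝ → ℝ} (hf : Continuous f) :
    IntervalIntegrable (fun φ : ℝ => f φ * sin φ ^ (ν - 1)) volume 0 π :=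
  (intervalIntegrable_sin_rpow_sub_one hν).continuousOn_mul hf.continuousOn

theorem cosMoment_odd (ν : ℝ) (j : ℕ) : cosMoment ν (2 * j + 1) = 0 := by
  have h := intervalIntegral.integral_comp_sub_left (a := 0) (b := π)
    (fun φ : ℝ => cos φ ^ (2 * j + 1) * sin φ ^ (ν - 1)) π
  simp only [cos_pi_sub, sin_pi_sub, (odd_two_mul_add_one j).neg_pow, neg_mul,
    intervalIntegral.integral_neg, sub_self, sub_zero] at h
  unfold cosMoment
  linarith

theorem cosMoment_add_two {ν : ℝ} (hν : 0 < ν) (i : ℕ) :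
    (ν + i + 1) * cosMoment ν (i + 2) = (i + 1) * cosMoment ν i := by
  have hint := (intervalIntegrable_mul_sin_rpow hν (f := fun φ => (ν + i + 1) * cos φ ^ (i + 2)
    - (i + 1) * cos φ ^ i) (by fun_prop))
  have h := intervalIntegral.integral_eq_sub_of_hasDerivAt_of_le
    (f := fun φ : ℝ => cos φ ^ (i + 1) * sin φ ^ ν) pi_pos.le
    ((continuous_cos.pow _).mul
      (continuous_sin.rpow_const fun _ => Or.inr hν.le)).continuousOn (fun φ hφ => ?_) hint
  · have e : ∀ φ : ℝ, ((ν + i + 1) * cos φ ^ (i + 2) - (i + 1) * cos φ ^ i) * sin φ ^ (ν - 1) =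
        (ν + i + 1) * (cos φ ^ (i + 2) * sin φ ^ (ν - 1)) -
          (i + 1) * (cos φ ^ i * sin φ ^ (ν - 1)) := fun φ => by ring
    simp only [e, sin_pi, sin_zero, zero_rpow hν.ne', mul_zero, sub_zero] at h
    rw [intervalIntegral.integral_sub
      ((intervalIntegrable_mul_sin_rpow hν (by fun_prop)).const_mul _)
      ((intervalIntegrable_mul_sin_rpow hν (by fun_prop)).const_mul _),
      intervalIntegral.integral_const_mul, intervalIntegral.integral_const_mul] at h
    unfold cosMoment
    linarith
  · have hs := sin_pos_of_mem_Ioo hφ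
    refine (((hasDerivAt_cos φ).pow (i + 1)).mul
      ((hasDerivAt_sin φ).rpow_const (Or.inl hs.ne'))).congr_deriv ?_
    have : sin φ ^ ν = sin φ ^ (ν - 1) * sin φ := by
      rw [← rpow_add_one hs.ne']; ring_nf
    simp only [this, Pi.pow_apply, Nat.add_sub_cancel]
    push_cast
    linear_combination (-(i + 1) * cos φ ^ i * sin φ ^ (ν - 1)) * sin_sq φ

theorem cosMoment_even {ν : ℝ} (hν : 0 < ν) (j : ℕ) :
    4 ^ j * j.factorial / (2 * j).factorial * cosMoment ν (2 * j) =
      cosMoment ν 0 / (ascPochhammer ℝ j).eval ((ν + 1) / 2) := by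
  induction j with
  | zero => simp
  | succ j ih =>
    have h := cosMoment_add_two hν (2 * j)
    have hp := ascPochhammer_pos j ((ν + 1) / 2) (by positivity)
    have hν' : 0 < ν + (2 * j : ℕ) + 1 := by positivity
    have h' : cosMoment ν (2 * j + 2) =
        ((2 * j : ℕ) + 1) * cosMoment ν (2 * j) / (ν + (2 * j : ℕ) + 1) := by
      rw [← h]; field_simp
    have ha : (ν + 1) / 2 + (j : ℝ) = (ν + (2 * j : ℕ) + 1) / 2 := by push_cast; ring
    rw [ascPochhammer_succ_eval, ha, ← div_div, ← ih, mul_add_one, h', Nat.factorial_succ (2 * j + 1),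
      Nat.factorial_succ (2 * j), Nat.factorial_succ j]
    push_cast
    push_cast at hν'
    field_simp
    ring

theorem abs_cosMoment_le {ν : ℝ} (hν : 0 < ν) (i : ℕ) : |cosMoment ν i| ≤ cosMoment ν 0 := by
  unfold cosMoment
  rw [← norm_eq_abs]
  refine intervalIntegral.norm_integral_le_of_norm_le pi_pos.le
    (.of_forall fun φ hφ => ?_) (intervalIntegrable_mul_sin_rpow hν (by fun_prop))
  have := sin_nonneg_of_nonneg_of_le_pi hφ.1.le hφ.2
  rw [norm_mul, norm_pow, pow_zero, norm_of_nonneg (rpow_nonneg this _)]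
  exact mul_le_mul_of_nonneg_right (pow_le_one₀ (norm_nonneg _) (abs_cos_le_one φ)) (by positivity)

/-- Termwise integration of a power series against the weight `sin ^ (ν - 1)`. -/
theorem hasSum_integral_pow_mul_sin_rpow {ν : ℝ} (hν : 0 < ν) {c : ℕ → ℝ} {f g : ℝ → ℝ}
    (hf : Continuous f) {M : ℝ} (hM : ∀ φ, |f φ| ≤ M) (hc : Summable fun k => |c k| * M ^ k)
    (hg : ∀ φ, HasSum (fun k => c k * f φ ^ k) (g φ)) :
    HasSum (fun k => c k * ∫ φ in (0 : ℝ)..π, f φ ^ k * sin φ ^ (ν - 1))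
      (∫ φ in (0 : ℝ)..π, g φ * sin φ ^ (ν - 1)) := by
  simp_rw [← intervalIntegral.integral_const_mul]
  refine intervalIntegral.hasSum_integral_of_dominated_convergence
    (fun k φ => |c k| * M ^ k * sin φ ^ (ν - 1)) (fun k => ?_) (fun k => .of_forall fun φ hφ => ?_)
    (.of_forall fun φ _ => hc.mul_right _) ?_ (.of_forall fun φ _ => ?_)
  · exact (intervalIntegrable_iff.1
      ((intervalIntegrable_mul_sin_rpow hν (hf.pow k)).const_mul _)).aestronglyMeasurable
  · rw [uIoc_of_le pi_pos.le] at hφ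
    have := sin_nonneg_of_nonneg_of_le_pi hφ.1.le hφ.2
    rw [norm_mul, norm_mul, norm_pow, norm_of_nonneg (rpow_nonneg this _), ← mul_assoc,
      norm_eq_abs, norm_eq_abs]
    gcongr
    exact hM φ
  · simp_rw [tsum_mul_right]
    exact (intervalIntegrable_sin_rpow_sub_one hν).const_mul _
  · simpa only [mul_assoc] using (hg φ).mul_right (sin φ ^ (ν - 1))

theorem summable_abs_neg_one_pow_div_factorial (L : ℝ) :
    Summable fun k : ℕ => |(-1 : ℝ) ^ k / (2 * k).factorial| * (L ^ 2) ^ k := by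
  refine (Real.hasSum_cosh L).summable.congr fun k => ?_
  rw [abs_div, abs_pow, abs_neg, abs_one, one_pow, abs_of_pos (by positivity), ← pow_mul]
  ring

theorem hasSum_integral_cos_mul_cos {ν : ℝ} (hν : 0 < ν) (x : ℝ) :
    HasSum (fun k : ℕ => (-1) ^ k / (2 * k).factorial * (x ^ (2 * k) * cosMoment ν (2 * k)))
      (∫ φ in (0 : ℝ)..π, cos (x * cos φ) * sin φ ^ (ν - 1)) := by
  have h := hasSum_integral_pow_mul_sin_rpow hν (c := fun k : ℕ => (-1) ^ k / (2 * k).factorial)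
    (f := fun φ => (x * cos φ) ^ 2) (g := fun φ => cos (x * cos φ)) (M := x ^ 2) (by fun_prop)
    (fun φ => ?_) (summable_abs_neg_one_pow_div_factorial x) (fun φ => ?_)
  · refine h.congr_fun fun k => ?_
    rw [cosMoment, ← intervalIntegral.integral_const_mul]
    congr 2
    ext φ
    ring
  · rw [abs_of_nonneg (sq_nonneg _), mul_pow]
    exact mul_le_of_le_one_right (sq_nonneg _) (cos_sq_le_one φ)
  · refine (Real.hasSum_cos (x * cos φ)).congr_fun fun k => ?_
    rw [← pow_mul]
    ring

theorem integral_distSq_pow_mul_sin_rpow {ν : ℝ} (hν : 0 < ν) (x y : ℝ) (k : ℕ) :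
    ∫ φ in (0 : ℝ)..π, (x ^ 2 + y ^ 2 - 2 * x * y * cos φ) ^ k * sin φ ^ (ν - 1) =
      ∑ q ∈ Finset.HasAntidiagonal.antidiagonal k, x ^ (2 * q.1) * y ^ (2 * q.2) *
        (k.factorial / (q.1.factorial * q.2.factorial) * (cosMoment ν 0 *
          ((ascPochhammer ℝ q.1).eval ((ν + 1) / 2 + q.2) /
            (ascPochhammer ℝ q.1).eval ((ν + 1) / 2)))) := by
  have e : ∀ φ : ℝ, (x ^ 2 + y ^ 2 - 2 * x * y * cos φ) ^ k * sin φ ^ (ν - 1) =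
      ∑ p ∈ Finset.HasAntidiagonal.antidiagonal k,
        (k.choose p.1 * (-(2 * x * y)) ^ p.1 * (x ^ 2 + y ^ 2) ^ p.2) *
          (cos φ ^ p.1 * sin φ ^ (ν - 1)) := by
    intro φ
    rw [show x ^ 2 + y ^ 2 - 2 * x * y * cos φ = -(2 * x * y) * cos φ + (x ^ 2 + y ^ 2) by ring,
      (Commute.all _ _).add_pow', Finset.sum_mul]
    refine Finset.sum_congr rfl fun p _ => ?_
    rw [nsmul_eq_mul, mul_pow]
    ring
  simp_rw [e]
  rw [intervalIntegral.integral_finsetSum fun p _ =>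
    (intervalIntegrable_mul_sin_rpow hν (by fun_prop)).const_mul _]
  simp_rw [intervalIntegral.integral_const_mul]
  have h := sum_antidiagonal_choose_mul_pow_eq x y (cosMoment ν) (cosMoment_odd ν) k
  convert h using 2 with p _ q _
  · rw [cosMoment]
    ring
  · rw [← sum_choose_mul_descFactorial_div_ascPochhammer q.1 q.2 _ (by positivity), Finset.mul_sum]
    congr 2
    refine Finset.sum_congr rfl fun j _ => ?_
    rw [cosMoment_even hν]
    ring

theorem cosMoment_mul_integral_distSq_pow {ν : ℝ} (hν : 0 < ν) (x y : ℝ) (k : ℕ) :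
    (-1) ^ k / (2 * k).factorial * cosMoment ν (2 * k) *
      ∫ φ in (0 : ℝ)..π, (x ^ 2 + y ^ 2 - 2 * x * y * cos φ) ^ k * sin φ ^ (ν - 1) =
      ∑ q ∈ Finset.HasAntidiagonal.antidiagonal k,
        ((-1) ^ q.1 / (2 * q.1).factorial * (x ^ (2 * q.1) * cosMoment ν (2 * q.1))) *
        ((-1) ^ q.2 / (2 * q.2).factorial * (y ^ (2 * q.2) * cosMoment ν (2 * q.2))) := by
  have ha : 0 < (ν + 1) / 2 := by positivity
  have hm : ∀ j, cosMoment ν (2 * j) = (2 * j).factorial * cosMoment ν 0 /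
      (4 ^ j * j.factorial * (ascPochhammer ℝ j).eval ((ν + 1) / 2)) := by
    intro j
    have hp := ascPochhammer_pos j _ ha
    have h := cosMoment_even hν j
    field_simp at h ⊢
    linarith
  rw [integral_distSq_pow_mul_sin_rpow hν, Finset.mul_sum]
  refine Finset.sum_congr rfl fun q hq => ?_
  obtain ⟨m, n⟩ := q
  rw [Finset.HasAntidiagonal.mem_antidiagonal] at hq
  subst hq
  have hadd : (ascPochhammer ℝ (m + n)).eval ((ν + 1) / 2) =
      (ascPochhammer ℝ n).eval ((ν + 1) / 2) * (ascPochhammer ℝ m).eval ((ν + 1) / 2 + n) := by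
    rw [add_comm m n, ← ascPochhammer_mul]
    simp
  have h1 := ascPochhammer_pos m _ ha
  have h2 := ascPochhammer_pos n _ ha
  have h3 := ascPochhammer_pos m ((ν + 1) / 2 + n) (by positivity)
  simp only [hm m, hm n, hm (m + n), hadd]
  generalize (ascPochhammer ℝ m).eval ((ν + 1) / 2 + n) = r at h3 ⊢
  field_simp
  ring

/-- The product formula for the unnormalized Poisson integrals. -/
theorem integral_integral_cos_sqrt_eq_mul {ν : ℝ} (hν : 0 < ν) (x y : ℝ) :
    ∫ φ in (0 : ℝ)..π, (∫ θ in (0 : ℝ)..π,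
      cos (√(x ^ 2 + y ^ 2 - 2 * x * y * cos φ) * cos θ) * sin θ ^ (ν - 1)) * sin φ ^ (ν - 1) =
    (∫ θ in (0 : ℝ)..π, cos (x * cos θ) * sin θ ^ (ν - 1)) *
      ∫ θ in (0 : ℝ)..π, cos (y * cos θ) * sin θ ^ (ν - 1) := by
  have hx := hasSum_integral_cos_mul_cos hν x
  have hy := hasSum_integral_cos_mul_cos hν y
  have hxy : ∀ φ, |2 * x * y * cos φ| ≤ 2 * |x| * |y| := fun φ => by
    rw [abs_mul, abs_mul, abs_mul, abs_two]
    exact mul_le_of_le_one_right (by positivity) (abs_cos_le_one φ)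
  have hpos : ∀ φ, 0 ≤ x ^ 2 + y ^ 2 - 2 * x * y * cos φ := fun φ => by
    have := (abs_le.1 (hxy φ)).2
    nlinarith [sq_nonneg (|x| - |y|), sq_abs x, sq_abs y]
  have h := hasSum_integral_pow_mul_sin_rpow hν
    (c := fun k : ℕ => (-1) ^ k / (2 * k).factorial * cosMoment ν (2 * k))
    (f := fun φ => x ^ 2 + y ^ 2 - 2 * x * y * cos φ)
    (g := fun φ => ∫ θ in (0 : ℝ)..π,
      cos (√(x ^ 2 + y ^ 2 - 2 * x * y * cos φ) * cos θ) * sin θ ^ (ν - 1))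
    (M := (|x| + |y|) ^ 2) (by fun_prop) (fun φ => ?_) ?_ (fun φ => ?_)
  · rw [← h.tsum_eq, ← hx.tsum_eq, ← hy.tsum_eq,
      tsum_mul_tsum_eq_tsum_sum_antidiagonal_of_summable_norm hx.summable.norm hy.summable.norm]
    exact tsum_congr fun k => cosMoment_mul_integral_distSq_pow hν x y k
  · rw [abs_of_nonneg (hpos φ)]
    have := (abs_le.1 (hxy φ)).1
    nlinarith [sq_abs x, sq_abs y]
  · refine .of_nonneg_of_le (fun k => by positivity) (fun k => ?_)
      ((summable_abs_neg_one_pow_div_factorial (|x| + |y|)).mul_right (cosMoment ν 0))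
    rw [abs_mul, mul_right_comm]
    exact mul_le_mul_of_nonneg_left (abs_cosMoment_le hν _) (by positivity)
  · refine (hasSum_integral_cos_mul_cos hν _).congr_fun fun k => ?_
    rw [pow_mul, sq_sqrt (hpos φ)]
    ring

/-- Product formula for the generalized translation of the normalized Bessel function:
`ᵛ𝒯_μ^λ j_{(ν−1)/2}(μ) = j_{(ν−1)/2}(λ) j_{(ν−1)/2}(μ)`. -/
theorem genT_normBessel (ν : ℝ) (hν : 0 < ν) (lam mu : ℝ) (hlam : 0 ≤ lam) (hmu : 0 ≤ mu) :
    genT ν (normBessel ((ν - 1) / 2)) mu lam =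
      normBessel ((ν - 1) / 2) lam * normBessel ((ν - 1) / 2) mu := by
  have h1 : (ν - 1) / 2 + 1 = (ν + 1) / 2 := by ring
  have h2 : (ν - 1) / 2 + 1 / 2 = ν / 2 := by ring
  have h3 : 2 * ((ν - 1) / 2) = ν - 1 := by ring
  have h := integral_integral_cos_sqrt_eq_mul hν mu lam
  simp only [genT, normBessel, h1, h2, h3, mul_assoc (Gamma ((ν + 1) / 2) / _),
    intervalIntegral.integral_const_mul]
  rw [h]
  ring
end
end

section
/- The function Φ(s,t) = ᵛ𝒯_s^t g(s) solves the singular hyperbolic equation ∂²Φ/∂s² + (ν/s) ∂Φ/∂s = ∂²Φ/∂t² + (ν/t) ∂Φ/∂t with initial conditions Φ(s,0) = g(s) and ∂Φ/∂t |_{t=0} = 0, whenever g ∈ C²(ℝ₊) is even. -/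
open MeasureTheory Real Set Metric

noncomputable section

theorem integral_Ioo_rpow_mul_one_sub_rpow {α β : ℝ} (hα : 0 < α) (hβ : 0 < β) :
    ∫ x in Ioo (0 : ℝ) 1, x ^ (α - 1) * (1 - x) ^ (β - 1) = ProbabilityTheory.beta α β := by
  rw [ProbabilityTheory.beta_eq_betaIntegralReal α β hα hβ, Complex.betaIntegral,
    intervalIntegral.integral_of_le zero_le_one, ← integral_Ioc_eq_integral_Ioo]
  have h : ∫ x in Ioc (0 : ℝ) 1, (x : ℂ) ^ ((α : ℂ) - 1) * (1 - (x : ℂ)) ^ ((β : ℂ) - 1) =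
      ∫ x in Ioc (0 : ℝ) 1, ((x ^ (α - 1) * (1 - x) ^ (β - 1) : ℝ) : ℂ) := by
    refine setIntegral_congr_fun measurableSet_Ioc fun x hx => ?_
    have h1 : 0 ≤ 1 - x := sub_nonneg.2 hx.2
    push_cast [Complex.ofReal_cpow hx.1.le, Complex.ofReal_cpow h1]
    rfl
  rw [h, integral_complex_ofReal, Complex.ofReal_re]

theorem image_half_one_sub_cos_Ioo :
    (fun φ : ℝ => (1 - cos φ) / 2) '' Ioo 0 π = Ioo 0 1 := by
  ext x
  constructor
  · rintro ⟨φ, hφ, rfl⟩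
    have h1 : cos φ < 1 := by
      simpa using cos_lt_cos_of_nonneg_of_le_pi le_rfl hφ.2.le hφ.1
    have h2 : -1 < cos φ := by
      simpa using cos_lt_cos_of_nonneg_of_le_pi hφ.1.le le_rfl hφ.2
    constructor <;> simp only <;> linarith
  · rintro ⟨h0, h1⟩
    refine ⟨arccos (1 - 2 * x), ⟨arccos_pos.2 (by linarith), ?_⟩, ?_⟩
    · refine lt_of_le_of_ne (arccos_le_pi _) fun h => ?_
      have := arccos_eq_pi.1 h
      linarith
    · simp only
      rw [cos_arccos (by linarith) (by linarith)]
      ring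

theorem integral_sin_rpow_eq_Gamma {ν : ℝ} (hν : 0 < ν) :
    ∫ φ in (0 : ℝ)..π, sin φ ^ (ν - 1) =
      √π * Real.Gamma (ν / 2) / Real.Gamma ((ν + 1) / 2) := by
  have hb := integral_Ioo_rpow_mul_one_sub_rpow (half_pos hν) (half_pos hν)
  have hderiv : ∀ φ ∈ Ioo (0 : ℝ) π,
      HasDerivWithinAt (fun φ : ℝ => (1 - cos φ) / 2) (sin φ / 2) (Ioo 0 π) φ := fun φ _ => by
    simpa using (((hasDerivAt_cos φ).const_sub 1).div_const 2).hasDerivWithinAt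
  have hinj : InjOn (fun φ : ℝ => (1 - cos φ) / 2) (Ioo 0 π) := fun a ha b hb hab =>
    injOn_cos (Ioo_subset_Icc_self ha) (Ioo_subset_Icc_self hb) (by simp only at hab; linarith)
  rw [← image_half_one_sub_cos_Ioo, integral_image_eq_integral_abs_deriv_smul measurableSet_Ioo
    hderiv hinj] at hb
  have hpt : ∀ φ ∈ Ioo (0 : ℝ) π, |sin φ / 2| • (((1 - cos φ) / 2) ^ (ν / 2 - 1) *
      (1 - (1 - cos φ) / 2) ^ (ν / 2 - 1)) = 2 ^ (1 - ν) * sin φ ^ (ν - 1) := fun φ hφ => by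
    have hs : 0 < sin φ := sin_pos_of_mem_Ioo hφ
    have h1 := cos_le_one φ
    have h2 := neg_one_le_cos φ
    have hs2 : (1 - cos φ) / 2 * (1 - (1 - cos φ) / 2) = (sin φ / 2) ^ (2 : ℝ) := by
      rw [rpow_two]
      linear_combination -(1 / 4) * sin_sq_add_cos_sq φ
    rw [← mul_rpow (by linarith) (by linarith), hs2, ← rpow_mul (by positivity),
      abs_of_pos (by positivity), smul_eq_mul]
    nth_rewrite 1 [← rpow_one (sin φ / 2)]
    rw [← rpow_add (by positivity), show (1 : ℝ) + 2 * (ν / 2 - 1) = ν - 1 by ring,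
      div_rpow hs.le zero_le_two, show 1 - ν = -(ν - 1) by ring, rpow_neg zero_le_two]
    ring
  rw [setIntegral_congr_fun measurableSet_Ioo hpt, integral_const_mul, ProbabilityTheory.beta,
    add_halves] at hb
  rw [intervalIntegral.integral_of_le pi_pos.le, integral_Ioc_eq_integral_Ioo]
  have hdup := Real.Gamma_mul_Gamma_add_half (ν / 2)
  rw [show ν / 2 + 1 / 2 = (ν + 1) / 2 by ring, show 2 * (ν / 2) = ν by ring] at hdup
  have hG := Real.Gamma_pos_of_pos hν
  have hG1 := Real.Gamma_pos_of_pos (half_pos hν)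
  have hG2 : 0 < Real.Gamma ((ν + 1) / 2) := Real.Gamma_pos_of_pos (by linarith)
  have h2 : (0 : ℝ) < 2 ^ (1 - ν) := rpow_pos_of_pos two_pos _
  rw [eq_div_iff hG.ne'] at hb
  rw [eq_div_iff hG2.ne']
  refine mul_left_cancel₀ (mul_pos (mul_pos h2 hG) hG1).ne' ?_
  linear_combination Real.Gamma ((ν + 1) / 2) * Real.Gamma (ν / 2) * hb +
    Real.Gamma (ν / 2) * Real.Gamma (ν / 2) * hdup

theorem intervalIntegrable_sin_rpow {ν : ℝ} (hν : 0 < ν) :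
    IntervalIntegrable (fun φ => sin φ ^ (ν - 1)) volume 0 π := by
  by_contra h
  have h0 := intervalIntegral.integral_undef h
  rw [integral_sin_rpow_eq_Gamma hν] at h0
  have hG1 := Real.Gamma_pos_of_pos (half_pos hν)
  have hG2 : 0 < Real.Gamma ((ν + 1) / 2) := Real.Gamma_pos_of_pos (by linarith)
  have : 0 < √π * Real.Gamma (ν / 2) / Real.Gamma ((ν + 1) / 2) := by positivity
  exact this.ne' h0

/-- Differentiation under an integral against an integrable weight. -/
theorem hasDerivAt_integral_mul_weight {F F' : ℝ → ℝ → ℝ} {w : ℝ → ℝ} {U : Set ℝ} {a b x : ℝ}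
    (hw : IntervalIntegrable w volume a b) (hU : IsOpen U) (hx : x ∈ U)
    (hF : ∀ y ∈ U, ∀ φ, HasDerivAt (fun z => F z φ) (F' y φ) y)
    (hFc : ∀ y ∈ U, Continuous (F y))
    (hF'c : ContinuousOn (Function.uncurry F') (U ×ˢ univ)) :
    HasDerivAt (fun y => ∫ φ in a..b, F y φ * w φ) (∫ φ in a..b, F' x φ * w φ) x := by
  obtain ⟨ε, hε, hεU⟩ := nhds_basis_closedBall.mem_iff.1 (hU.mem_nhds hx)
  have hF'x : Continuous (F' x) := by
    rw [← continuousOn_univ]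
    exact hF'c.comp (f := fun φ => (x, φ)) (by fun_prop) fun φ _ => ⟨hx, mem_univ _⟩
  obtain ⟨C, hC⟩ := ((isCompact_closedBall x ε).prod (isCompact_uIcc (a := a) (b := b)))
    |>.exists_bound_of_continuousOn (hF'c.mono (prod_mono hεU (subset_univ _)))
  refine (intervalIntegral.hasDerivAt_integral_of_dominated_loc_of_deriv_le
    (F' := fun y φ => F' y φ * w φ) (bound := fun φ => C * ‖w φ‖)
    (closedBall_mem_nhds x hε) ?_ ?_ ?_ ?_ (hw.norm.const_mul C) ?_).2
  · filter_upwards [hU.mem_nhds hx] with y hy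
    exact (hFc y hy).aestronglyMeasurable.mul hw.def'.aestronglyMeasurable
  · exact hw.continuousOn_mul (hFc x hx).continuousOn
  · exact hF'x.aestronglyMeasurable.mul hw.def'.aestronglyMeasurable
  · refine Filter.Eventually.of_forall fun φ hφ y hy => ?_
    rw [norm_mul]
    exact mul_le_mul_of_nonneg_right (hC (y, φ) ⟨hy, uIoc_subset_uIcc hφ⟩) (norm_nonneg _)
  · exact Filter.Eventually.of_forall fun φ _ y hy => (hF y (hεU hy) φ).mul_const _

theorem sq_add_sq_sub_two_mul_cos_pos {s t : ℝ} (hs : 0 < s) (ht : 0 < t) (hst : s ≠ t) (φ : ℝ) :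
    0 < s ^ 2 + t ^ 2 - 2 * s * t * cos φ := by
  have h1 : 0 < (s - t) ^ 2 := by
    have := sub_ne_zero.2 hst
    positivity
  nlinarith [mul_nonneg (mul_pos hs ht).le (sub_nonneg.2 (cos_le_one φ))]

theorem exists_hasDerivAt_of_contDiffOn_two {k : ℝ → ℝ} {U : Set ℝ} (hU : IsOpen U)
    (hk : ContDiffOn ℝ 2 k U) :
    ∃ k₁ k₂ : ℝ → ℝ, (∀ q ∈ U, HasDerivAt k (k₁ q) q) ∧ (∀ q ∈ U, HasDerivAt k₁ (k₂ q) q) ∧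
      ContinuousOn k₂ U := by
  have h1 : ContDiffOn ℝ 1 (deriv k) U := hk.deriv_of_isOpen hU (by norm_num)
  refine ⟨deriv k, deriv (deriv k), fun q hq => ?_, fun q hq => ?_,
    h1.continuousOn_deriv_of_isOpen hU (by norm_num)⟩
  · exact ((hk.differentiableOn (by norm_num)).differentiableAt (hU.mem_nhds hq)).hasDerivAt
  · exact ((h1.differentiableOn (by norm_num)).differentiableAt (hU.mem_nhds hq)).hasDerivAt

section

variable {k k₁ k₂ w : ℝ → ℝ} {s t : ℝ}

theorem hasDerivAt_sq_add_sq_sub (s t φ : ℝ) :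
    HasDerivAt (fun s => s ^ 2 + t ^ 2 - 2 * s * t * cos φ) (2 * (s - t * cos φ)) s := by
  have h := (((hasDerivAt_id' s).pow 2).add_const (t ^ 2)).sub
    ((((hasDerivAt_id' s).const_mul 2).mul_const t).mul_const (cos φ))
  refine h.congr_deriv ?_
  simp
  ring

theorem hasDerivAt_integral_comp_sq_add_sq_sub (hw : IntervalIntegrable w volume 0 π)
    (hk : ∀ q ∈ Ioi (0 : ℝ), HasDerivAt k (k₁ q) q) (hk₁ : ContinuousOn k₁ (Ioi 0))
    (hs : 0 < s) (ht : 0 < t) (hst : s ≠ t) :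
    HasDerivAt (fun s => ∫ φ in (0 : ℝ)..π, k (s ^ 2 + t ^ 2 - 2 * s * t * cos φ) * w φ)
      (∫ φ in (0 : ℝ)..π,
        k₁ (s ^ 2 + t ^ 2 - 2 * s * t * cos φ) * (2 * (s - t * cos φ)) * w φ) s := by
  have hkc : ContinuousOn k (Ioi 0) := fun q hq => (hk q hq).continuousAt.continuousWithinAt
  refine hasDerivAt_integral_mul_weight (U := Ioi 0 ∩ {t}ᶜ)
    (F := fun s φ => k (s ^ 2 + t ^ 2 - 2 * s * t * cos φ))
    (F' := fun s φ => k₁ (s ^ 2 + t ^ 2 - 2 * s * t * cos φ) * (2 * (s - t * cos φ)))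
    hw (isOpen_Ioi.inter isOpen_compl_singleton) ⟨hs, hst⟩ ?_ ?_ ?_
  · exact fun y hy φ => (hk _ (sq_add_sq_sub_two_mul_cos_pos hy.1 ht hy.2 φ)).comp y
      (hasDerivAt_sq_add_sq_sub y t φ)
  · exact fun y hy => hkc.comp_continuous (by fun_prop)
      fun φ => sq_add_sq_sub_two_mul_cos_pos hy.1 ht hy.2 φ
  · refine ContinuousOn.mul (hk₁.comp (f := fun p : ℝ × ℝ =>
      p.1 ^ 2 + t ^ 2 - 2 * p.1 * t * cos p.2) (by fun_prop) ?_) (by fun_prop)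
    exact fun p hp => sq_add_sq_sub_two_mul_cos_pos hp.1.1 ht hp.1.2 p.2

theorem hasDerivAt_integral_deriv_comp_sq_add_sq_sub (hw : IntervalIntegrable w volume 0 π)
    (hk₁ : ∀ q ∈ Ioi (0 : ℝ), HasDerivAt k₁ (k₂ q) q) (hk₂ : ContinuousOn k₂ (Ioi 0))
    (hs : 0 < s) (ht : 0 < t) (hst : s ≠ t) :
    HasDerivAt (fun s => ∫ φ in (0 : ℝ)..π,
        k₁ (s ^ 2 + t ^ 2 - 2 * s * t * cos φ) * (2 * (s - t * cos φ)) * w φ)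
      (∫ φ in (0 : ℝ)..π, (k₂ (s ^ 2 + t ^ 2 - 2 * s * t * cos φ) * (2 * (s - t * cos φ)) ^ 2 +
        k₁ (s ^ 2 + t ^ 2 - 2 * s * t * cos φ) * 2) * w φ) s := by
  have hkc : ContinuousOn k₁ (Ioi 0) := fun q hq => (hk₁ q hq).continuousAt.continuousWithinAt
  have hmaps : ∀ p ∈ (Ioi 0 ∩ {t}ᶜ) ×ˢ (univ : Set ℝ),
      p.1 ^ 2 + t ^ 2 - 2 * p.1 * t * cos p.2 ∈ Ioi (0 : ℝ) :=
    fun p hp => sq_add_sq_sub_two_mul_cos_pos hp.1.1 ht hp.1.2 p.2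
  refine hasDerivAt_integral_mul_weight (U := Ioi 0 ∩ {t}ᶜ)
    (F := fun s φ => k₁ (s ^ 2 + t ^ 2 - 2 * s * t * cos φ) * (2 * (s - t * cos φ)))
    (F' := fun s φ => k₂ (s ^ 2 + t ^ 2 - 2 * s * t * cos φ) * (2 * (s - t * cos φ)) ^ 2 +
      k₁ (s ^ 2 + t ^ 2 - 2 * s * t * cos φ) * 2)
    hw (isOpen_Ioi.inter isOpen_compl_singleton) ⟨hs, hst⟩ ?_ ?_ ?_
  · intro y hy φ
    have h1 := (hk₁ _ (sq_add_sq_sub_two_mul_cos_pos hy.1 ht hy.2 φ)).comp y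
      (hasDerivAt_sq_add_sq_sub y t φ)
    have h2 := ((hasDerivAt_id' y).sub_const (t * cos φ)).const_mul 2
    refine (h1.mul h2).congr_deriv ?_
    simp only [Function.comp_apply]
    ring
  · exact fun y hy => (hkc.comp_continuous (by fun_prop)
      fun φ => sq_add_sq_sub_two_mul_cos_pos hy.1 ht hy.2 φ).mul (by fun_prop)
  · exact ((hk₂.comp (f := fun p : ℝ × ℝ => p.1 ^ 2 + t ^ 2 - 2 * p.1 * t * cos p.2)
      (by fun_prop) hmaps).mul (by fun_prop)).add
      ((hkc.comp (f := fun p : ℝ × ℝ => p.1 ^ 2 + t ^ 2 - 2 * p.1 * t * cos p.2)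
      (by fun_prop) hmaps).mul (by fun_prop))

/-- The integrand is the total derivative of `k₁ (s² + t² - 2 s t cos φ) sin^ν φ`. -/
theorem integral_total_derivative_eq_zero {ν : ℝ} (hν : 0 < ν)
    (hk₁ : ∀ q ∈ Ioi (0 : ℝ), HasDerivAt k₁ (k₂ q) q) (hk₂ : ContinuousOn k₂ (Ioi 0))
    (hs : 0 < s) (ht : 0 < t) (hst : s ≠ t) :
    ∫ φ in (0 : ℝ)..π, (k₂ (s ^ 2 + t ^ 2 - 2 * s * t * cos φ) * (2 * s * t * sin φ ^ 2) +
      ν * k₁ (s ^ 2 + t ^ 2 - 2 * s * t * cos φ) * cos φ) * sin φ ^ (ν - 1) = 0 := by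
  have hpos := sq_add_sq_sub_two_mul_cos_pos hs ht hst
  have hkc : ContinuousOn k₁ (Ioi 0) := fun q hq => (hk₁ q hq).continuousAt.continuousWithinAt
  have hc₁ : Continuous fun φ => k₁ (s ^ 2 + t ^ 2 - 2 * s * t * cos φ) :=
    hkc.comp_continuous (by fun_prop) hpos
  have hc₂ : Continuous fun φ => k₂ (s ^ 2 + t ^ 2 - 2 * s * t * cos φ) :=
    hk₂.comp_continuous (by fun_prop) hpos
  rw [intervalIntegral.integral_eq_sub_of_hasDerivAt_of_le pi_pos.le
    (f := fun φ => k₁ (s ^ 2 + t ^ 2 - 2 * s * t * cos φ) * sin φ ^ ν)]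
  · simp [zero_rpow hν.ne']
  · exact (hc₁.mul (continuous_sin.rpow_const fun _ => Or.inr hν.le)).continuousOn
  · intro φ hφ
    have hsin : 0 < sin φ := sin_pos_of_mem_Ioo hφ
    have hq : HasDerivAt (fun φ => s ^ 2 + t ^ 2 - 2 * s * t * cos φ) (2 * s * t * sin φ) φ := by
      simpa using ((hasDerivAt_cos φ).const_mul (2 * s * t)).const_sub (s ^ 2 + t ^ 2)
    refine (((hk₁ _ (hpos φ)).comp φ hq).mul
      ((hasDerivAt_sin φ).rpow_const (p := ν) (Or.inl hsin.ne'))).congr_deriv ?_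
    have hpow : sin φ ^ ν = sin φ * sin φ ^ (ν - 1) := by
      rw [rpow_sub_one hsin.ne']
      field_simp
    simp only [Function.comp_apply]
    rw [hpow]
    ring
  · exact (intervalIntegrable_sin_rpow hν).continuousOn_mul
      ((hc₂.mul (by fun_prop)).add ((hc₁.const_mul ν).mul continuous_cos)).continuousOn

end

theorem genT_comm (ν : ℝ) (g : ℝ → ℝ) (s t : ℝ) : genT ν g s t = genT ν g t s := by
  simp only [genT, add_comm (s ^ 2), mul_right_comm 2 s t]

theorem genT_neg_right (ν : ℝ) (g : ℝ → ℝ) (s t : ℝ) : genT ν g s (-t) = genT ν g s t := by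
  unfold genT
  congr 1
  have h := intervalIntegral.integral_comp_sub_left (a := 0) (b := π)
    (fun φ => g √(s ^ 2 + t ^ 2 - 2 * s * t * cos φ) * sin φ ^ (ν - 1)) π
  rw [sub_self, sub_zero] at h
  rw [← h]
  simp [cos_pi_sub, sin_pi_sub]

theorem genT_zero_right {ν : ℝ} (hν : 0 < ν) (g : ℝ → ℝ) {s : ℝ} (hs : 0 ≤ s) :
    genT ν g s 0 = g s := by
  have hG1 := Real.Gamma_pos_of_pos (half_pos hν)
  have hG2 : 0 < Real.Gamma ((ν + 1) / 2) := Real.Gamma_pos_of_pos (by linarith)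
  have hpi : 0 < √π := sqrt_pos.2 pi_pos
  simp only [genT, ne_eq, OfNat.ofNat_ne_zero, not_false_eq_true, zero_pow, add_zero, mul_zero,
    zero_mul, sub_zero, sqrt_sq hs, intervalIntegral.integral_const_mul,
    integral_sin_rpow_eq_Gamma hν]
  field_simp

theorem deriv_genT_zero_right (ν : ℝ) (g : ℝ → ℝ) (s : ℝ) :
    deriv (fun t => genT ν g s t) 0 = 0 := by
  have h := deriv_comp_neg (fun t => genT ν g s t) 0
  simp only [genT_neg_right, neg_zero] at h
  linarith

theorem hasDerivAt_genT_left {ν : ℝ} (hν : 0 < ν) {g k₁ : ℝ → ℝ}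
    (hk : ∀ q ∈ Ioi (0 : ℝ), HasDerivAt (fun q => g √q) (k₁ q) q)
    (hk₁ : ContinuousOn k₁ (Ioi 0)) {s t : ℝ} (hs : 0 < s) (ht : 0 < t) (hst : s ≠ t) :
    HasDerivAt (fun s => genT ν g s t)
      (Real.Gamma ((ν + 1) / 2) / (√π * Real.Gamma (ν / 2)) * ∫ φ in (0 : ℝ)..π,
        k₁ (s ^ 2 + t ^ 2 - 2 * s * t * cos φ) * (2 * (s - t * cos φ)) * sin φ ^ (ν - 1)) s :=
  (hasDerivAt_integral_comp_sq_add_sq_sub (intervalIntegrable_sin_rpow hν) hk hk₁ hs ht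
    hst).const_mul _

theorem deriv_deriv_genT_left {ν : ℝ} (hν : 0 < ν) {g k₁ k₂ : ℝ → ℝ}
    (hk : ∀ q ∈ Ioi (0 : ℝ), HasDerivAt (fun q => g √q) (k₁ q) q)
    (hk₁ : ∀ q ∈ Ioi (0 : ℝ), HasDerivAt k₁ (k₂ q) q) (hk₂ : ContinuousOn k₂ (Ioi 0))
    {s t : ℝ} (hs : 0 < s) (ht : 0 < t) (hst : s ≠ t) :
    deriv (fun s => deriv (fun s => genT ν g s t) s) s =
      Real.Gamma ((ν + 1) / 2) / (√π * Real.Gamma (ν / 2)) * ∫ φ in (0 : ℝ)..π,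
        (k₂ (s ^ 2 + t ^ 2 - 2 * s * t * cos φ) * (2 * (s - t * cos φ)) ^ 2 +
          k₁ (s ^ 2 + t ^ 2 - 2 * s * t * cos φ) * 2) * sin φ ^ (ν - 1) := by
  have hkc : ContinuousOn k₁ (Ioi 0) := fun q hq => (hk₁ q hq).continuousAt.continuousWithinAt
  refine (((hasDerivAt_integral_deriv_comp_sq_add_sq_sub (intervalIntegrable_sin_rpow hν) hk₁ hk₂
    hs ht hst).const_mul _).congr_of_eventuallyEq ?_).deriv
  filter_upwards [(isOpen_Ioi.inter isOpen_compl_singleton).mem_nhds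
    (⟨hs, hst⟩ : s ∈ Ioi 0 ∩ {t}ᶜ)] with y hy
  exact (hasDerivAt_genT_left hν hk hkc hy.1 ht hy.2).deriv

/-- Away from the diagonal, the difference of the two Bessel operators applied to the generalized
translation is the integral of a total derivative. -/
theorem genT_EPD_of_ne {ν : ℝ} (hν : 0 < ν) {g : ℝ → ℝ} (hg : ContDiff ℝ 2 g)
    {s t : ℝ} (hs : 0 < s) (ht : 0 < t) (hst : s ≠ t) :
    deriv (fun s' => deriv (fun s'' => genT ν g s'' t) s') s +
        (ν / s) * deriv (fun s' => genT ν g s' t) s =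
      deriv (fun t' => deriv (fun t'' => genT ν g t'' s) t') t +
        (ν / t) * deriv (fun t' => genT ν g t' s) t := by
  have hsqrt : ContDiffOn ℝ 2 (fun q => g √q) (Ioi 0) := fun q hq =>
    (hg.contDiffAt.comp q (contDiffAt_sqrt (ne_of_gt hq))).contDiffWithinAt
  obtain ⟨k₁, k₂, hk, hk₁, hk₂⟩ := exists_hasDerivAt_of_contDiffOn_two isOpen_Ioi hsqrt
  have hkc : ContinuousOn k₁ (Ioi 0) := fun q hq => (hk₁ q hq).continuousAt.continuousWithinAt
  have hpos := sq_add_sq_sub_two_mul_cos_pos hs ht hst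
  have hc₁ : Continuous fun φ => k₁ (s ^ 2 + t ^ 2 - 2 * s * t * cos φ) :=
    hkc.comp_continuous (by fun_prop) hpos
  have hc₂ : Continuous fun φ => k₂ (s ^ 2 + t ^ 2 - 2 * s * t * cos φ) :=
    hk₂.comp_continuous (by fun_prop) hpos
  have hint : ∀ f : ℝ → ℝ, Continuous f →
      IntervalIntegrable (fun φ => f φ * sin φ ^ (ν - 1)) volume 0 π := fun f hf =>
    (intervalIntegrable_sin_rpow hν).continuousOn_mul hf.continuousOn
  have hint₁ : ∀ a b : ℝ, IntervalIntegrable (fun φ => k₁ (s ^ 2 + t ^ 2 - 2 * s * t * cos φ) *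
      (2 * (a - b * cos φ)) * sin φ ^ (ν - 1)) volume 0 π :=
    fun a b => hint _ (hc₁.mul (by fun_prop))
  have hint₂ : ∀ a b : ℝ, IntervalIntegrable (fun φ =>
      (k₂ (s ^ 2 + t ^ 2 - 2 * s * t * cos φ) * (2 * (a - b * cos φ)) ^ 2 +
        k₁ (s ^ 2 + t ^ 2 - 2 * s * t * cos φ) * 2) * sin φ ^ (ν - 1)) volume 0 π :=
    fun a b => hint _ ((hc₂.mul (by fun_prop)).add (hc₁.mul_const 2))
  rw [deriv_deriv_genT_left hν hk hk₁ hk₂ hs ht hst,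
    deriv_deriv_genT_left hν hk hk₁ hk₂ ht hs hst.symm,
    (hasDerivAt_genT_left hν hk hkc hs ht hst).deriv,
    (hasDerivAt_genT_left hν hk hkc ht hs hst.symm).deriv]
  simp only [add_comm (t ^ 2), mul_right_comm 2 t s]
  have htotal := integral_total_derivative_eq_zero hν hk₁ hk₂ hs ht hst
  rw [mul_left_comm (ν / s), mul_left_comm (ν / t), ← mul_add, ← mul_add]
  congr 1
  refine sub_eq_zero.1 ?_
  refine Eq.trans ?_ (mul_eq_zero_of_right (2 * (s ^ 2 - t ^ 2) / (s * t)) htotal)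
  simp only [← intervalIntegral.integral_const_mul]
  rw [← intervalIntegral.integral_add (hint₂ s t) ((hint₁ s t).const_mul _),
    ← intervalIntegral.integral_add (hint₂ t s) ((hint₁ t s).const_mul _),
    ← intervalIntegral.integral_sub ((hint₂ s t).add ((hint₁ s t).const_mul _))
      ((hint₂ t s).add ((hint₁ t s).const_mul _))]
  refine intervalIntegral.integral_congr fun φ _ => ?_
  simp only [sin_sq]
  field_simp
  ring

/-- `Φ(s,t) = ᵛ𝒯_s^t g(s)` solves the singular hyperbolic (Euler–Poisson–Darboux type)
equation `Φ_ss + (ν/s)Φ_s = Φ_tt + (ν/t)Φ_t` with `Φ(s,0) = g(s)`, `Φ_t(s,0) = 0`. -/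
theorem genT_solves_EPD (ν : ℝ) (hν : 0 < ν) (g : ℝ → ℝ)
    (hg : ContDiff ℝ 2 g) (hgeven : ∀ x, g (-x) = g x) :
    (∀ s t : ℝ, 0 < s → 0 < t →
        deriv (fun s' => deriv (fun s'' => genT ν g s'' t) s') s +
            (ν / s) * deriv (fun s' => genT ν g s' t) s =
          deriv (fun t' => deriv (fun t'' => genT ν g s t'') t') t +
            (ν / t) * deriv (fun t' => genT ν g s t') t) ∧
      (∀ s : ℝ, 0 ≤ s → genT ν g s 0 = g s) ∧
      (∀ s : ℝ, 0 ≤ s → deriv (fun t => genT ν g s t) 0 = 0) := by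
  refine ⟨fun s t hs ht => ?_, fun s hs => genT_zero_right hν g hs,
    fun s _ => deriv_genT_zero_right ν g s⟩
  simp only [genT_comm ν g s]
  rcases eq_or_ne s t with rfl | hst
  · rfl
  · exact genT_EPD_of_ne hν hg hs ht hst
end
end
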